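/- arXiv:2503.19200 — 2 statements merged into one kernel-verified Lean document; each statement's English description precedes it below -/
import Mathlib

section
/- (Proposition 1.) Fix A, B₁, B₂, gains K*_{1,k}, K*_{2,k}, weights Q₁, Q_{1,N}, R₁, horizon N, and initial state x₀. With A_{cl,k}, Φ, S_k, Λ_j as defined, suppose Player 2 applies u_{2,k} = −K*_{2,k}x_k + Δu_{2,k} while Player 1 applies u_{1,k} = −K*_{1,k}x_k, and let ΔJ₁ denote the resulting change in Player 1's cost relative to the nominal (Δu₂ ≡ 0) trajectory. Then there exists a constant C ≥ 0, depending only on A, B₁, B₂, the gains, the weights, N, and x₀ (but not on Δu₂), such that | ΔJ₁ − 2 Σ_{j=0}^{N−1} x₀ᵀ Λ_j B₂ Δu_{2,j} | ≤ C ‖Δu₂‖₂², where ‖Δu₂‖₂² := Σ_{j=0}^{N−1} ‖Δu_{2,j}‖². -/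
open Matrix Finset

noncomputable section

/-- Closed-loop matrix `A_{cl,k} = A - B₁K*_{1,k} - B₂K*_{2,k}`. -/
def Acl {n m1 m2 : ℕ} (A : Matrix (Fin n) (Fin n) ℝ)
    (B1 : Matrix (Fin n) (Fin m1) ℝ) (B2 : Matrix (Fin n) (Fin m2) ℝ)
    (K1 : ℕ → Matrix (Fin m1) (Fin n) ℝ) (K2 : ℕ → Matrix (Fin m2) (Fin n) ℝ)
    (k : ℕ) : Matrix (Fin n) (Fin n) ℝ :=
  A - B1 * K1 k - B2 * K2 k

/-- State-transition matrix `Φ(k,j) = A_{cl,k-1} ⋯ A_{cl,j}` (with `Φ(j,j) = I`). -/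
def Phi {n m1 m2 : ℕ} (A : Matrix (Fin n) (Fin n) ℝ)
    (B1 : Matrix (Fin n) (Fin m1) ℝ) (B2 : Matrix (Fin n) (Fin m2) ℝ)
    (K1 : ℕ → Matrix (Fin m1) (Fin n) ℝ) (K2 : ℕ → Matrix (Fin m2) (Fin n) ℝ)
    (k j : ℕ) : Matrix (Fin n) (Fin n) ℝ :=
  (((List.range' j (k - j)).map (fun i => Acl A B1 B2 K1 K2 i)).reverse).prod

/-- `S_k = Q₁ + K*_{1,k}ᵀ R₁ K*_{1,k}`. -/
def Smat {n m1 : ℕ} (Q1 : Matrix (Fin n) (Fin n) ℝ) (R1 : Matrix (Fin m1) (Fin m1) ℝ)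
    (K1 : ℕ → Matrix (Fin m1) (Fin n) ℝ) (k : ℕ) : Matrix (Fin n) (Fin n) ℝ :=
  Q1 + (K1 k)ᵀ * R1 * K1 k

/-- `Λ_j = Σ_{k=j+1}^{N-1} Φ(k,0)ᵀ S_k Φ(k,j+1) + Φ(N,0)ᵀ Q_{1,N} Φ(N,j+1)`. -/
def Lam {n m1 m2 : ℕ} (A : Matrix (Fin n) (Fin n) ℝ)
    (B1 : Matrix (Fin n) (Fin m1) ℝ) (B2 : Matrix (Fin n) (Fin m2) ℝ)
    (K1 : ℕ → Matrix (Fin m1) (Fin n) ℝ) (K2 : ℕ → Matrix (Fin m2) (Fin n) ℝ)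
    (Q1 Q1N : Matrix (Fin n) (Fin n) ℝ) (R1 : Matrix (Fin m1) (Fin m1) ℝ)
    (N j : ℕ) : Matrix (Fin n) (Fin n) ℝ :=
  (∑ k ∈ Finset.Ico (j + 1) N,
      (Phi A B1 B2 K1 K2 k 0)ᵀ * Smat Q1 R1 K1 k * Phi A B1 B2 K1 K2 k (j + 1))
    + (Phi A B1 B2 K1 K2 N 0)ᵀ * Q1N * Phi A B1 B2 K1 K2 N (j + 1)

/-- Perturbed trajectory: Player 1 applies `u₁ = -K*₁ x`, Player 2 applies
`u₂ = -K*₂ x + Δu`; the nominal trajectory is recovered for `Δu ≡ 0`. -/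
def traj {n m1 m2 : ℕ} (A : Matrix (Fin n) (Fin n) ℝ)
    (B1 : Matrix (Fin n) (Fin m1) ℝ) (B2 : Matrix (Fin n) (Fin m2) ℝ)
    (K1 : ℕ → Matrix (Fin m1) (Fin n) ℝ) (K2 : ℕ → Matrix (Fin m2) (Fin n) ℝ)
    (x0 : Fin n → ℝ) (Δu : ℕ → Fin m2 → ℝ) : ℕ → Fin n → ℝ
  | 0 => x0
  | k + 1 =>
      A.mulVec (traj A B1 B2 K1 K2 x0 Δu k)
        + B1.mulVec (-(K1 k).mulVec (traj A B1 B2 K1 K2 x0 Δu k))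
        + B2.mulVec (-(K2 k).mulVec (traj A B1 B2 K1 K2 x0 Δu k) + Δu k)

/-- Player 1's finite-horizon cost along a trajectory `x` with its feedback law
`u₁,k = -K*_{1,k} x_k`. -/
def cost1 {n m1 : ℕ} (Q1 Q1N : Matrix (Fin n) (Fin n) ℝ)
    (R1 : Matrix (Fin m1) (Fin m1) ℝ) (K1 : ℕ → Matrix (Fin m1) (Fin n) ℝ)
    (N : ℕ) (x : ℕ → Fin n → ℝ) : ℝ :=
  (∑ k ∈ Finset.range N,
      (x k ⬝ᵥ Q1.mulVec (x k)
        + (-(K1 k).mulVec (x k)) ⬝ᵥ R1.mulVec (-(K1 k).mulVec (x k))))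
    + x N ⬝ᵥ Q1N.mulVec (x N)

section LinearAlgebra

variable {p q : ℕ}

lemma dotProduct_mulVec_add_self {M : Matrix (Fin p) (Fin p) ℝ} (hM : M.IsSymm)
    (x e : Fin p → ℝ) :
    (x + e) ⬝ᵥ M *ᵥ (x + e) = x ⬝ᵥ M *ᵥ x + 2 * (x ⬝ᵥ M *ᵥ e) + e ⬝ᵥ M *ᵥ e := by
  have h : e ⬝ᵥ M *ᵥ x = x ⬝ᵥ M *ᵥ e := by
    rw [dotProduct_mulVec, ← mulVec_transpose, hM.eq, dotProduct_comm]
  rw [mulVec_add, add_dotProduct, dotProduct_add, dotProduct_add, h]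
  ring

lemma dotProduct_self_nonneg_real (v : Fin p → ℝ) : 0 ≤ v ⬝ᵥ v :=
  Finset.sum_nonneg fun i _ => mul_self_nonneg (v i)

lemma dotProduct_add_self_le (v w : Fin p → ℝ) :
    (v + w) ⬝ᵥ (v + w) ≤ 2 * (v ⬝ᵥ v) + 2 * (w ⬝ᵥ w) := by
  have h := dotProduct_self_nonneg_real (v - w)
  simp only [sub_dotProduct, dotProduct_sub, add_dotProduct, dotProduct_add] at h ⊢
  linarith

lemma abs_dotProduct_le (v w : Fin p → ℝ) : |v ⬝ᵥ w| ≤ v ⬝ᵥ v + w ⬝ᵥ w := by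
  have h₁ := dotProduct_self_nonneg_real (v - w)
  have h₂ := dotProduct_self_nonneg_real (v + w)
  have hv := dotProduct_self_nonneg_real v
  have hw := dotProduct_self_nonneg_real w
  simp only [sub_dotProduct, dotProduct_sub, add_dotProduct, dotProduct_add,
    dotProduct_comm w v] at h₁ h₂
  rw [abs_le]
  constructor <;> linarith

lemma mulVec_dotProduct_self_le (M : Matrix (Fin p) (Fin q) ℝ) (v : Fin q → ℝ) :
    M *ᵥ v ⬝ᵥ M *ᵥ v ≤ (∑ i, ∑ j, M i j ^ 2) * (v ⬝ᵥ v) := by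
  rw [Finset.sum_mul]
  refine Finset.sum_le_sum fun i _ => ?_
  have h := Finset.sum_mul_sq_le_sq_mul_sq Finset.univ (M i) v
  simpa only [mulVec, dotProduct, sq] using h

lemma exists_abs_dotProduct_mulVec_le (M : Matrix (Fin p) (Fin p) ℝ) :
    ∃ C : ℝ, 0 ≤ C ∧ ∀ v : Fin p → ℝ, |v ⬝ᵥ M *ᵥ v| ≤ C * (v ⬝ᵥ v) := by
  refine ⟨1 + ∑ i, ∑ j, M i j ^ 2, by positivity, fun v => ?_⟩
  linarith [abs_dotProduct_le v (M *ᵥ v), mulVec_dotProduct_self_le M v]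

end LinearAlgebra

section Trajectory

variable {n m1 m2 : ℕ} (A : Matrix (Fin n) (Fin n) ℝ)
  (B1 : Matrix (Fin n) (Fin m1) ℝ) (B2 : Matrix (Fin n) (Fin m2) ℝ)
  (K1 : ℕ → Matrix (Fin m1) (Fin n) ℝ) (K2 : ℕ → Matrix (Fin m2) (Fin n) ℝ)

lemma Phi_self (k : ℕ) : Phi A B1 B2 K1 K2 k k = 1 := by
  simp [Phi]

lemma Phi_succ {k j : ℕ} (h : j ≤ k) :
    Phi A B1 B2 K1 K2 (k + 1) j = Acl A B1 B2 K1 K2 k * Phi A B1 B2 K1 K2 k j := by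
  simp [Phi, Nat.succ_sub h, List.range'_1_concat, Nat.add_sub_cancel' h]

lemma traj_succ (x0 : Fin n → ℝ) (Δu : ℕ → Fin m2 → ℝ) (k : ℕ) :
    traj A B1 B2 K1 K2 x0 Δu (k + 1)
      = Acl A B1 B2 K1 K2 k *ᵥ traj A B1 B2 K1 K2 x0 Δu k + B2 *ᵥ Δu k := by
  simp only [traj, Acl, sub_mulVec, mulVec_add, mulVec_neg, mulVec_mulVec]
  abel

lemma traj_zero_input (x0 : Fin n → ℝ) (k : ℕ) :
    traj A B1 B2 K1 K2 x0 (fun _ => 0) k = Phi A B1 B2 K1 K2 k 0 *ᵥ x0 := by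
  induction k with
  | zero => simp [traj, Phi_self]
  | succ k ih => rw [traj_succ, ih, Phi_succ _ _ _ _ _ k.zero_le, mulVec_mulVec, mulVec_zero,
      add_zero]

lemma traj_zero_state (Δu : ℕ → Fin m2 → ℝ) (k : ℕ) :
    traj A B1 B2 K1 K2 0 Δu k
      = ∑ j ∈ range k, (Phi A B1 B2 K1 K2 k (j + 1) * B2) *ᵥ Δu j := by
  induction k with
  | zero => simp [traj]
  | succ k ih =>
    rw [traj_succ, ih, sum_range_succ, Phi_self, Matrix.one_mul, mulVec_sum]
    congr 1
    refine Finset.sum_congr rfl fun j hj => ?_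
    rw [Phi_succ _ _ _ _ _ (Finset.mem_range.mp hj), mulVec_mulVec, Matrix.mul_assoc]

lemma traj_superposition (x0 : Fin n → ℝ) (Δu : ℕ → Fin m2 → ℝ) (k : ℕ) :
    traj A B1 B2 K1 K2 x0 Δu k
      = traj A B1 B2 K1 K2 x0 (fun _ => 0) k + traj A B1 B2 K1 K2 0 Δu k := by
  induction k with
  | zero => simp [traj]
  | succ k ih =>
    rw [traj_succ, ih, traj_succ, traj_succ, mulVec_add, mulVec_zero, add_zero, add_assoc]

lemma exists_traj_zero_state_le (k : ℕ) :
    ∃ C : ℝ, 0 ≤ C ∧ ∀ Δu : ℕ → Fin m2 → ℝ,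
      traj A B1 B2 K1 K2 0 Δu k ⬝ᵥ traj A B1 B2 K1 K2 0 Δu k
        ≤ C * ∑ j ∈ range k, Δu j ⬝ᵥ Δu j := by
  induction k with
  | zero => exact ⟨0, le_rfl, fun Δu => by simp [traj]⟩
  | succ k ih =>
    obtain ⟨C, hC, h⟩ := ih
    set a := ∑ i, ∑ j, Acl A B1 B2 K1 K2 k i j ^ 2
    set b := ∑ i, ∑ j, B2 i j ^ 2
    have ha : 0 ≤ a := by positivity
    have hb : 0 ≤ b := by positivity
    refine ⟨2 * (a * C) + 2 * b, by positivity, fun Δu => ?_⟩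
    rw [traj_succ, sum_range_succ]
    have h₁ := dotProduct_add_self_le
      (Acl A B1 B2 K1 K2 k *ᵥ traj A B1 B2 K1 K2 0 Δu k) (B2 *ᵥ Δu k)
    have h₂ := mulVec_dotProduct_self_le (Acl A B1 B2 K1 K2 k) (traj A B1 B2 K1 K2 0 Δu k)
    have h₃ := mulVec_dotProduct_self_le B2 (Δu k)
    have h₄ := mul_le_mul_of_nonneg_left (h Δu) ha
    have h₅ : 0 ≤ b * ∑ j ∈ range k, Δu j ⬝ᵥ Δu j :=
      mul_nonneg hb (Finset.sum_nonneg fun j _ => dotProduct_self_nonneg_real _)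
    have h₆ : 0 ≤ a * C * (Δu k ⬝ᵥ Δu k) :=
      mul_nonneg (mul_nonneg ha hC) (dotProduct_self_nonneg_real _)
    linarith

lemma exists_abs_traj_zero_state_quadratic_le (M : Matrix (Fin n) (Fin n) ℝ) {k N : ℕ}
    (hk : k ≤ N) :
    ∃ C : ℝ, 0 ≤ C ∧ ∀ Δu : ℕ → Fin m2 → ℝ,
      |traj A B1 B2 K1 K2 0 Δu k ⬝ᵥ M *ᵥ traj A B1 B2 K1 K2 0 Δu k|
        ≤ C * ∑ j ∈ range N, Δu j ⬝ᵥ Δu j := by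
  obtain ⟨C, hC, h⟩ := exists_traj_zero_state_le A B1 B2 K1 K2 k
  obtain ⟨D, hD, h'⟩ := exists_abs_dotProduct_mulVec_le M
  refine ⟨D * C, mul_nonneg hD hC, fun Δu => (h' _).trans ?_⟩
  rw [mul_assoc]
  refine mul_le_mul_of_nonneg_left ((h Δu).trans (mul_le_mul_of_nonneg_left ?_ hC)) hD
  exact Finset.sum_le_sum_of_subset_of_nonneg (Finset.range_mono hk)
    fun j _ _ => dotProduct_self_nonneg_real _

lemma traj_dotProduct_mulVec_traj (M : Matrix (Fin n) (Fin n) ℝ) (x0 : Fin n → ℝ)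
    (Δu : ℕ → Fin m2 → ℝ) (k : ℕ) :
    traj A B1 B2 K1 K2 x0 (fun _ => 0) k ⬝ᵥ M *ᵥ traj A B1 B2 K1 K2 0 Δu k
      = ∑ j ∈ range k, x0 ⬝ᵥ
          ((Phi A B1 B2 K1 K2 k 0)ᵀ * M * Phi A B1 B2 K1 K2 k (j + 1) * B2) *ᵥ Δu j := by
  rw [traj_zero_input, traj_zero_state, mulVec_sum, dotProduct_sum]
  refine Finset.sum_congr rfl fun j _ => ?_
  rw [← vecMul_transpose, ← dotProduct_mulVec, mulVec_mulVec, mulVec_mulVec]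
  simp only [Matrix.mul_assoc]

lemma sum_dotProduct_Lam_mulVec (Q1 Q1N : Matrix (Fin n) (Fin n) ℝ)
    (R1 : Matrix (Fin m1) (Fin m1) ℝ) (N : ℕ) (x0 : Fin n → ℝ) (Δu : ℕ → Fin m2 → ℝ) :
    ∑ j ∈ range N, x0 ⬝ᵥ (Lam A B1 B2 K1 K2 Q1 Q1N R1 N j * B2) *ᵥ Δu j
      = ∑ k ∈ range N, traj A B1 B2 K1 K2 x0 (fun _ => 0) k ⬝ᵥ
            Smat Q1 R1 K1 k *ᵥ traj A B1 B2 K1 K2 0 Δu k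
        + traj A B1 B2 K1 K2 x0 (fun _ => 0) N ⬝ᵥ Q1N *ᵥ traj A B1 B2 K1 K2 0 Δu N := by
  simp only [traj_dotProduct_mulVec_traj, Lam, Matrix.add_mul, add_mulVec, dotProduct_add,
    Finset.sum_add_distrib, Matrix.sum_mul, sum_mulVec, dotProduct_sum]
  refine congrArg (· + _) (Finset.sum_comm' fun j k => ?_)
  simp only [Finset.mem_range, Finset.mem_Ico]
  omega

end Trajectory

section Cost

variable {n m1 : ℕ} {Q1 Q1N : Matrix (Fin n) (Fin n) ℝ} {R1 : Matrix (Fin m1) (Fin m1) ℝ}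

lemma Smat_isSymm (hQ1 : Q1.IsSymm) (hR1 : R1.IsSymm) (K1 : ℕ → Matrix (Fin m1) (Fin n) ℝ)
    (k : ℕ) : (Smat Q1 R1 K1 k).IsSymm := by
  simp [Matrix.IsSymm, Smat, hQ1.eq, hR1.eq, Matrix.mul_assoc]

lemma cost1_eq_sum_Smat (K1 : ℕ → Matrix (Fin m1) (Fin n) ℝ) (N : ℕ) (x : ℕ → Fin n → ℝ) :
    cost1 Q1 Q1N R1 K1 N x
      = ∑ k ∈ range N, x k ⬝ᵥ Smat Q1 R1 K1 k *ᵥ x k + x N ⬝ᵥ Q1N *ᵥ x N := by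
  unfold cost1
  congr 1
  refine Finset.sum_congr rfl fun k _ => ?_
  rw [Smat, add_mulVec, dotProduct_add, mulVec_neg, neg_dotProduct_neg,
    ← vecMul_transpose (K1 k), ← dotProduct_mulVec, vecMul_transpose, mulVec_mulVec, mulVec_mulVec, Matrix.mul_assoc]

lemma cost1_add (hQ1 : Q1.IsSymm) (hQ1N : Q1N.IsSymm) (hR1 : R1.IsSymm)
    (K1 : ℕ → Matrix (Fin m1) (Fin n) ℝ) (N : ℕ) (x e : ℕ → Fin n → ℝ) :
    cost1 Q1 Q1N R1 K1 N (x + e)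
      = cost1 Q1 Q1N R1 K1 N x
        + 2 * (∑ k ∈ range N, x k ⬝ᵥ Smat Q1 R1 K1 k *ᵥ e k + x N ⬝ᵥ Q1N *ᵥ e N)
        + cost1 Q1 Q1N R1 K1 N e := by
  simp only [cost1_eq_sum_Smat, Pi.add_apply, dotProduct_mulVec_add_self hQ1N,
    dotProduct_mulVec_add_self (Smat_isSymm hQ1 hR1 K1 _), Finset.sum_add_distrib,
    ← Finset.mul_sum]
  ring

end Cost

/-- **Proposition 1.** There is a constant `C ≥ 0`, independent of the
deviations `Δu₂`, such that
`|ΔJ₁ - 2 Σ_{j<N} x₀ᵀ Λ_j B₂ Δu_{2,j}| ≤ C ‖Δu₂‖₂²`,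
where `‖Δu₂‖₂² = Σ_{j<N} ‖Δu_{2,j}‖²`. -/
theorem first_order_sensitivity_of_cost
    {n m1 m2 : ℕ} (N : ℕ)
    (A : Matrix (Fin n) (Fin n) ℝ)
    (B1 : Matrix (Fin n) (Fin m1) ℝ) (B2 : Matrix (Fin n) (Fin m2) ℝ)
    (K1 : ℕ → Matrix (Fin m1) (Fin n) ℝ) (K2 : ℕ → Matrix (Fin m2) (Fin n) ℝ)
    (Q1 Q1N : Matrix (Fin n) (Fin n) ℝ) (R1 : Matrix (Fin m1) (Fin m1) ℝ)
    (hQ1 : Q1.PosSemidef) (hQ1N : Q1N.PosSemidef) (hR1 : R1.PosDef)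
    (x0 : Fin n → ℝ) :
    ∃ C : ℝ, 0 ≤ C ∧ ∀ Δu : ℕ → Fin m2 → ℝ,
      |cost1 Q1 Q1N R1 K1 N (traj A B1 B2 K1 K2 x0 Δu)
          - cost1 Q1 Q1N R1 K1 N (traj A B1 B2 K1 K2 x0 (fun _ => 0))
          - 2 * ∑ j ∈ Finset.range N,
              x0 ⬝ᵥ (Lam A B1 B2 K1 K2 Q1 Q1N R1 N j * B2).mulVec (Δu j)|
        ≤ C * ∑ j ∈ Finset.range N, Δu j ⬝ᵥ Δu j := by
  choose! C hC hbound using fun k (hk : k ≤ N) =>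
    exists_abs_traj_zero_state_quadratic_le A B1 B2 K1 K2 (Smat Q1 R1 K1 k) hk
  obtain ⟨D, hD, hboundN⟩ :=
    exists_abs_traj_zero_state_quadratic_le A B1 B2 K1 K2 Q1N (le_refl N)
  have hlt : ∀ k ∈ range N, k ≤ N := fun k hk => (Finset.mem_range.mp hk).le
  refine ⟨∑ k ∈ range N, C k + D,
    add_nonneg (Finset.sum_nonneg fun k hk => hC k (hlt k hk)) hD, fun Δu => ?_⟩
  have hsup : traj A B1 B2 K1 K2 x0 Δu
      = traj A B1 B2 K1 K2 x0 (fun _ => 0) + traj A B1 B2 K1 K2 0 Δu :=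
    funext (traj_superposition A B1 B2 K1 K2 x0 Δu)
  have hsymm {p : ℕ} {M : Matrix (Fin p) (Fin p) ℝ} (hM : M.IsHermitian) : M.IsSymm := by
    rw [Matrix.IsSymm, ← conjTranspose_eq_transpose_of_trivial, hM.eq]
  rw [hsup, cost1_add (hsymm hQ1.isHermitian) (hsymm hQ1N.isHermitian)
    (hsymm hR1.isHermitian), sum_dotProduct_Lam_mulVec, add_sub_right_comm, add_sub_cancel_left,
    add_sub_cancel_left, cost1_eq_sum_Smat, add_mul, Finset.sum_mul]
  refine (abs_add_le _ _).trans (add_le_add ((Finset.abs_sum_le_sum_abs _ _).trans ?_)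
    (hboundN Δu))
  exact Finset.sum_le_sum fun k hk => hbound k (hlt k hk) Δu

end
end

section
/- (Corollary 2, (1,2) Riccati block.) In the setting of the augmented Riccati recursion with Ā_k = [A_{eff,k}, I; 0, αI], B̄_k = [B₁; 0], Q̄ = diag(Q₁,0), Q̄_N = diag(Q_{1,N},0), write P^{xx}_k and P^{xw}_k for the upper-left and upper-right n×n blocks of the symmetric matrix P̄_k, and H_k := R₁ + B₁ᵀP^{xx}_{k+1}B₁ (assumed invertible). Then P^{xw}_N = 0 and for each k = N−1,…,0, P^{xw}_k = A_{eff,k}ᵀP^{xx}_{k+1} + α A_{eff,k}ᵀP^{xw}_{k+1} − A_{eff,k}ᵀP^{xx}_{k+1}B₁H_k⁻¹B₁ᵀ( P^{xx}_{k+1} + αP^{xw}_{k+1} ). -/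
open Matrix Finset

/-- **Corollary 2, (1,2) Riccati block.** Under the slow-varying
augmented realization, the upper-right block `Pˣʷ_k` of the augmented Riccati
sequence satisfies `Pˣʷ_N = 0` and
`Pˣʷ_k = A_{eff,k}ᵀPˣˣ_{k+1} + α A_{eff,k}ᵀPˣʷ_{k+1}
  - A_{eff,k}ᵀPˣˣ_{k+1}B₁H_k⁻¹B₁ᵀ(Pˣˣ_{k+1} + αPˣʷ_{k+1})`,
where `H_k = R₁ + B₁ᵀPˣˣ_{k+1}B₁`. -/
theorem augmented_riccati_block_12
    {n m1 : ℕ} (N : ℕ)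
    (Aeff : ℕ → Matrix (Fin n) (Fin n) ℝ) (B1 : Matrix (Fin n) (Fin m1) ℝ)
    (Q1 Q1N : Matrix (Fin n) (Fin n) ℝ) (R1 : Matrix (Fin m1) (Fin m1) ℝ)
    (hR1 : R1.PosDef)
    (α : ℝ)
    (Abar : ℕ → Matrix (Fin n ⊕ Fin n) (Fin n ⊕ Fin n) ℝ)
    (hAbar : ∀ k, Abar k = Matrix.fromBlocks (Aeff k) 1 0 (α • (1 : Matrix (Fin n) (Fin n) ℝ)))
    (Bbar : Matrix (Fin n ⊕ Fin n) (Fin m1) ℝ)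
    (hBbar : Bbar = Matrix.fromRows B1 0)
    (Qbar QbarN : Matrix (Fin n ⊕ Fin n) (Fin n ⊕ Fin n) ℝ)
    (hQbar : Qbar = Matrix.fromBlocks Q1 0 0 0)
    (hQbarN : QbarN = Matrix.fromBlocks Q1N 0 0 0)
    (P : ℕ → Matrix (Fin n ⊕ Fin n) (Fin n ⊕ Fin n) ℝ)
    (hPN : P N = QbarN)
    (hP : ∀ k < N,
      P k = Qbar + (Abar k)ᵀ * P (k + 1) * Abar k
        - (Abar k)ᵀ * P (k + 1) * Bbar * (R1 + Bbarᵀ * P (k + 1) * Bbar)⁻¹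
            * Bbarᵀ * P (k + 1) * Abar k)
    (hPsymm : ∀ k ≤ N, (P k).IsSymm)
    (hinv : ∀ k < N, IsUnit (R1 + B1ᵀ * (P (k + 1)).toBlocks₁₁ * B1)) :
    (P N).toBlocks₁₂ = 0 ∧
    ∀ k < N,
      (P k).toBlocks₁₂
        = (Aeff k)ᵀ * (P (k + 1)).toBlocks₁₁
          + α • ((Aeff k)ᵀ * (P (k + 1)).toBlocks₁₂)
          - (Aeff k)ᵀ * (P (k + 1)).toBlocks₁₁ * B1
              * (R1 + B1ᵀ * (P (k + 1)).toBlocks₁₁ * B1)⁻¹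
              * B1ᵀ * ((P (k + 1)).toBlocks₁₁ + α • (P (k + 1)).toBlocks₁₂) := by
  subst hBbar hQbar hQbarN
  refine ⟨by rw [hPN, toBlocks_fromBlocks₁₂], fun k hk => ?_⟩
  rw [hP k hk, hAbar k]
  obtain ⟨X, Y, Z, W, hXYZW⟩ : ∃ X Y Z W, P (k + 1) = fromBlocks X Y Z W :=
    ⟨_, _, _, _, (fromBlocks_toBlocks _).symm⟩
  have hB : (fromRows B1 (0 : Matrix (Fin n) (Fin m1) ℝ))ᵀ * fromBlocks X Y Z W
      = fromCols (B1ᵀ * X) (B1ᵀ * Y) := by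
    simp [transpose_fromRows, fromCols_mul_fromBlocks]
  have hH : (fromRows B1 (0 : Matrix (Fin n) (Fin m1) ℝ))ᵀ * fromBlocks X Y Z W
      * fromRows B1 (0 : Matrix (Fin n) (Fin m1) ℝ) = B1ᵀ * X * B1 := by
    rw [hB, fromCols_mul_fromRows, Matrix.mul_zero, add_zero]
  rw [hXYZW, hH, Matrix.mul_assoc _ _ᵀ (fromBlocks X Y Z W), hB]
  simp only [fromBlocks_transpose, fromBlocks_multiply, fromBlocks_mul_fromRows, fromRows_mul,
    fromCols_mul_fromBlocks, sub_eq_add_neg, fromBlocks_add,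
    Matrix.mul_assoc, toBlocks_fromBlocks₁₁, toBlocks_fromBlocks₁₂]
  simp [Matrix.mul_add, Matrix.mul_assoc, fromBlocks_neg, fromBlocks_add]
end
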